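/- For every prime number p, taking L to be an algebraic closure of 𝔽_p, there exists a vector v ∈ V₄ all of whose 14 coefficients a,…,n lie in the prime subfield 𝔽_p and which is stable for the action of G₄ = SL₂(L)×SL₃(L)×Lˣ. (For instance, Δ₄(UX² + WY² + (U+W)Z² + WXY + (U+W)YZ, U) = 125.) -/

import Mathlib

/- Zariski-closedness of a subset of affine n-space over L: it is the common zero locus
of a set of polynomial functions (with respect to the fixed coordinates). -/
def IsZariskiClosed {n : ℕ} {L : Type*} [CommRing L] (s : Set (Fin n → L)) : Prop :=
  ∃ P : Set (MvPolynomial (Fin n) L), s = {x | ∀ p ∈ P, MvPolynomial.eval x p = 0}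

/- The pair (F, G) ∈ V₄ with coordinates c (variables: inl 0,1 = U,W; inr 0,1,2 = X,Y,Z):
F = (aU+bW)X² + (cU+dW)Y² + (eU+fW)Z² + (gU+hW)XY + (iU+jW)XZ + (kU+lW)YZ, G = mU + nW. -/
noncomputable def toV4 {L : Type*} [CommRing L] (c : Fin 14 → L) :
    MvPolynomial (Fin 2 ⊕ Fin 3) L × MvPolynomial (Fin 2 ⊕ Fin 3) L :=
  ((MvPolynomial.C (c 0) * MvPolynomial.X (Sum.inl 0) + MvPolynomial.C (c 1) * MvPolynomial.X (Sum.inl 1)) * MvPolynomial.X (Sum.inr 0) ^ 2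
    + (MvPolynomial.C (c 2) * MvPolynomial.X (Sum.inl 0) + MvPolynomial.C (c 3) * MvPolynomial.X (Sum.inl 1)) * MvPolynomial.X (Sum.inr 1) ^ 2
    + (MvPolynomial.C (c 4) * MvPolynomial.X (Sum.inl 0) + MvPolynomial.C (c 5) * MvPolynomial.X (Sum.inl 1)) * MvPolynomial.X (Sum.inr 2) ^ 2
    + (MvPolynomial.C (c 6) * MvPolynomial.X (Sum.inl 0) + MvPolynomial.C (c 7) * MvPolynomial.X (Sum.inl 1)) * (MvPolynomial.X (Sum.inr 0) * MvPolynomial.X (Sum.inr 1))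
    + (MvPolynomial.C (c 8) * MvPolynomial.X (Sum.inl 0) + MvPolynomial.C (c 9) * MvPolynomial.X (Sum.inl 1)) * (MvPolynomial.X (Sum.inr 0) * MvPolynomial.X (Sum.inr 2))
    + (MvPolynomial.C (c 10) * MvPolynomial.X (Sum.inl 0) + MvPolynomial.C (c 11) * MvPolynomial.X (Sum.inl 1)) * (MvPolynomial.X (Sum.inr 1) * MvPolynomial.X (Sum.inr 2)),
   MvPolynomial.C (c 12) * MvPolynomial.X (Sum.inl 0) + MvPolynomial.C (c 13) * MvPolynomial.X (Sum.inl 1))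

/- Linear substitution of (U,W) by A ∈ SL₂(L) and of (X,Y,Z) by B ∈ SL₃(L). -/
noncomputable def sub4 {L : Type*} [CommRing L]
    (A : Matrix.SpecialLinearGroup (Fin 2) L) (B : Matrix.SpecialLinearGroup (Fin 3) L)
    (v : MvPolynomial (Fin 2 ⊕ Fin 3) L) : MvPolynomial (Fin 2 ⊕ Fin 3) L :=
  MvPolynomial.aeval
    (Sum.elim (fun i => ∑ j : Fin 2, MvPolynomial.C (A.1 i j) * MvPolynomial.X (Sum.inl j))
              (fun i => ∑ j : Fin 3, MvPolynomial.C (B.1 i j) * MvPolynomial.X (Sum.inr j))) v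

/- The action of G₄ = SL₂(L) × SL₃(L) × Lˣ on V₄:
(A, B, t)·(F, G) = (t⁻¹·F′, t³·G′), where F′, G′ are obtained by linear substitution. -/
noncomputable def act4 {L : Type*} [Field L]
    (g : Matrix.SpecialLinearGroup (Fin 2) L × Matrix.SpecialLinearGroup (Fin 3) L × Lˣ)
    (v : MvPolynomial (Fin 2 ⊕ Fin 3) L × MvPolynomial (Fin 2 ⊕ Fin 3) L) :
    MvPolynomial (Fin 2 ⊕ Fin 3) L × MvPolynomial (Fin 2 ⊕ Fin 3) L :=
  (((g.2.2 : L))⁻¹ • sub4 g.1 g.2.1 v.1, ((g.2.2 : L)) ^ 3 • sub4 g.1 g.2.1 v.2)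

/- Stability: the orbit of v (in the coordinate space of V₄ with respect to its monomial
basis) is Zariski-closed and the stabilizer of v in G₄ is finite. -/
def Stable4 {L : Type*} [Field L] (c : Fin 14 → L) : Prop :=
  IsZariskiClosed {c' : Fin 14 → L |
    ∃ g : Matrix.SpecialLinearGroup (Fin 2) L × Matrix.SpecialLinearGroup (Fin 3) L × Lˣ,
      toV4 c' = act4 g (toV4 c)} ∧
  {g : Matrix.SpecialLinearGroup (Fin 2) L × Matrix.SpecialLinearGroup (Fin 3) L × Lˣ |
      act4 g (toV4 c) = toV4 c}.Finite

/-
We show that `Δ₄ ≠ 0` implies stability over every algebraically closed field. The quartic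
`G · disc₂(F)` has invariants `I`, `J` and discriminant `Δ₄`, which are constant on orbits of `G₄`.
If `Δ₄ ≠ 0`, some element of `G₄` takes `G` to `U` and makes the cubic `disc₂(F)` monic in `W`, with
distinct roots `W = eᵢU`. The conics of the pencil `F` at these roots are its line pairs, so `F` has
four base points; moving three of them to the coordinate points gives a normal form that depends
only on the `eᵢ`. Since the values of `I`, `J`, `Δ₄` determine a monic cubic up to `W ↦ W + sU`
in every characteristic, the orbit of a vector with `Δ₄ ≠ 0` is the locus where `I`, `J`, `Δ₄` take
their values at that vector, which is closed. An element `(A, B, t)` of the stabilizer has `t⁶ = 1`,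
and `B` permutes the base points of `F`; these data determine it. Finally, there are two integral
vectors with coprime values of `Δ₄`.
-/

open Function Matrix MatrixGroups MulOpposite

theorem isZariskiClosed_setOf_eval_eq {R : Type*} [CommRing R] {n : ℕ} {ι : Type*}
    (p : ι → MvPolynomial (Fin n) R) (a : ι → R) :
    IsZariskiClosed {x | ∀ i, MvPolynomial.eval x (p i) = a i} :=
  ⟨Set.range fun i => p i - MvPolynomial.C (a i), by
    simp only [Set.forall_mem_range, map_sub, MvPolynomial.eval_C, sub_eq_zero]⟩

theorem finite_stabilizer_of_orbitRel {G X : Type*} [Group G] [MulAction G X] {x y : X}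
    (h : MulAction.orbitRel G X x y) (hx : (MulAction.stabilizer G x : Set G).Finite) :
    (MulAction.stabilizer G y : Set G).Finite :=
  have := hx.to_subtype
  Finite.of_equiv _ (MulAction.stabilizerEquivStabilizerOfOrbitRel h).toEquiv

section Conics

variable {R : Type*} [CommRing R]

/-- The value at `v` of the ternary quadratic form `q₀X² + q₁Y² + q₂Z² + q₃XY + q₄XZ + q₅YZ`.
Conics are encoded throughout by this coefficient vector `q`, so as to cover characteristic 2. -/
def conicEval (q : Fin 6 → R) (v : Fin 3 → R) : R :=
  q 0 * v 0 ^ 2 + q 1 * v 1 ^ 2 + q 2 * v 2 ^ 2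
    + q 3 * (v 0 * v 1) + q 4 * (v 0 * v 2) + q 5 * (v 1 * v 2)

/-- The polar form of the conic `q`, given by its coefficients. -/
def conicPolar (q : Fin 6 → R) (v w : Fin 3 → R) : R :=
  2 * q 0 * (v 0 * w 0) + 2 * q 1 * (v 1 * w 1) + 2 * q 2 * (v 2 * w 2)
    + q 3 * (v 0 * w 1 + v 1 * w 0) + q 4 * (v 0 * w 2 + v 2 * w 0)
    + q 5 * (v 1 * w 2 + v 2 * w 1)

theorem conicEval_smul_add_smul (q : Fin 6 → R) (x y : R) (v w : Fin 3 → R) :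
    conicEval q (x • v + y • w)
      = conicEval q v * x ^ 2 + conicPolar q v w * (x * y) + conicEval q w * y ^ 2 := by
  simp only [conicEval, conicPolar, Pi.add_apply, Pi.smul_apply, smul_eq_mul]
  ring

theorem conicEval_add_smul (q r : Fin 6 → R) (x : R) (v : Fin 3 → R) :
    conicEval (q + x • r) v = conicEval q v + x * conicEval r v := by
  simp only [conicEval, Pi.add_apply, Pi.smul_apply, smul_eq_mul]
  ring

theorem conicEval_smul_left (x : R) (q : Fin 6 → R) (v : Fin 3 → R) :
    conicEval (x • q) v = x * conicEval q v := by
  simp only [conicEval, Pi.smul_apply, smul_eq_mul]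
  ring

theorem conicEval_smul_right (q : Fin 6 → R) (x : R) (v : Fin 3 → R) :
    conicEval q (x • v) = x ^ 2 * conicEval q v := by
  simp only [conicEval, Pi.smul_apply, smul_eq_mul]
  ring

theorem conicPolar_smul_smul (q : Fin 6 → R) (x y : R) (v w : Fin 3 → R) :
    conicPolar q (x • v) (y • w) = x * y * conicPolar q v w := by
  simp only [conicPolar, Pi.smul_apply, smul_eq_mul]
  ring

/-- The linear substitution of `(X, Y, Z)` by the matrix `B`, as a linear map on conics. -/
def conicSub (B : Matrix (Fin 3) (Fin 3) R) : (Fin 6 → R) →ₗ[R] Fin 6 → R where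
  toFun q := ![conicEval q (B.col 0), conicEval q (B.col 1), conicEval q (B.col 2),
    conicPolar q (B.col 0) (B.col 1), conicPolar q (B.col 0) (B.col 2),
    conicPolar q (B.col 1) (B.col 2)]
  map_add' q r := by
    ext i
    fin_cases i <;> simp [conicEval, conicPolar] <;> ring
  map_smul' x q := by
    ext i
    fin_cases i <;> simp [conicEval, conicPolar] <;> ring

theorem conicSub_apply (B : Matrix (Fin 3) (Fin 3) R) (q : Fin 6 → R) :
    conicSub B q = ![conicEval q (B.col 0), conicEval q (B.col 1), conicEval q (B.col 2),
      conicPolar q (B.col 0) (B.col 1), conicPolar q (B.col 0) (B.col 2),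
      conicPolar q (B.col 1) (B.col 2)] := rfl

theorem conicEval_conicSub (B : Matrix (Fin 3) (Fin 3) R) (q : Fin 6 → R) (v : Fin 3 → R) :
    conicEval (conicSub B q) v = conicEval q (B *ᵥ v) := by
  simp [conicEval, conicSub_apply, conicPolar, mulVec, dotProduct, Fin.sum_univ_three]
  ring

theorem conicSub_one (q : Fin 6 → R) : conicSub 1 q = q := by
  ext i
  fin_cases i <;> simp [conicSub_apply, conicEval, conicPolar]

theorem conicEval_injective : Injective (conicEval : (Fin 6 → R) → (Fin 3 → R) → R) := by
  intro q r h
  have hpolar (v w : Fin 3 → R) : conicPolar q v w = conicPolar r v w := by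
    have := congrFun h ((1 : R) • v + (1 : R) • w)
    simpa only [conicEval_smul_add_smul, h, one_pow, mul_one, add_left_inj, add_right_inj]
      using this
  rw [← conicSub_one q, ← conicSub_one r]
  simp only [conicSub_apply, h, hpolar]

theorem conicSub_conicSub (B C : Matrix (Fin 3) (Fin 3) R) (q : Fin 6 → R) :
    conicSub C (conicSub B q) = conicSub (B * C) q :=
  conicEval_injective <| funext fun v => by
    simp only [conicEval_conicSub, mulVec_mulVec]

/-- The ternary quadratic discriminant `disc₂`. -/
def conicDisc (q : Fin 6 → R) : R :=
  4 * q 0 * q 1 * q 2 + q 3 * q 4 * q 5 - q 0 * q 5 ^ 2 - q 1 * q 4 ^ 2 - q 2 * q 3 ^ 2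

theorem conicDisc_smul (x : R) (q : Fin 6 → R) : conicDisc (x • q) = x ^ 3 * conicDisc q := by
  simp only [conicDisc, Pi.smul_apply, smul_eq_mul]
  ring

/-- The coefficient of `x²y` in `conicDisc (x • q + y • r)`. -/
def conicDiscMix (q r : Fin 6 → R) : R :=
  4 * (q 0 * q 1 * r 2 + q 0 * r 1 * q 2 + r 0 * q 1 * q 2)
    + (q 3 * q 4 * r 5 + q 3 * r 4 * q 5 + r 3 * q 4 * q 5)
    - (2 * q 0 * q 5 * r 5 + r 0 * q 5 ^ 2) - (2 * q 1 * q 4 * r 4 + r 1 * q 4 ^ 2)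
    - (2 * q 2 * q 3 * r 3 + r 2 * q 3 ^ 2)

theorem conicDisc_conicSub (B : Matrix (Fin 3) (Fin 3) R) (q : Fin 6 → R) :
    conicDisc (conicSub B q) = B.det ^ 2 * conicDisc q := by
  simp only [conicDisc, conicEval, conicSub_apply, conicPolar, col_apply, det_fin_three, cons_val]
  ring

theorem conicDiscMix_conicSub (B : Matrix (Fin 3) (Fin 3) R) (q r : Fin 6 → R) :
    conicDiscMix (conicSub B q) (conicSub B r) = B.det ^ 2 * conicDiscMix q r := by
  simp only [conicDiscMix, conicEval, conicSub_apply, conicPolar, col_apply, det_fin_three,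
    cons_val]
  ring

end Conics

section CommonPoints

theorem exists_specialLinearGroup_col_eq_smul {K ι : Type*} [Field K] [Fintype ι] [DecidableEq ι]
    (i : ι) {v : ι → K} (hv : v ≠ 0) :
    ∃ (B : Matrix.SpecialLinearGroup ι K) (x : K), B.1.col i = x • v := by
  have hi : (Pi.single i 1 : ι → K) ≠ 0 := by simp
  obtain ⟨B, hB⟩ := MulAction.exists_smul_eq (Matrix.SpecialLinearGroup ι K)
    (Projectivization.mk K _ hi)
    (Projectivization.mk K v hv)
  obtain ⟨x, hx⟩ := (Projectivization.mk_eq_mk_iff' ..).1 hB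
  exact ⟨B, x, (mulVec_single_one ..).symm.trans hx.symm⟩

variable {L : Type*} [Field L] [IsAlgClosed L]

theorem exists_binaryQuadratic_eq_zero (a b c : L) :
    ∃ x y : L, (x ≠ 0 ∨ y ≠ 0) ∧ a * x ^ 2 + b * (x * y) + c * y ^ 2 = 0 := by
  by_cases ha : a = 0
  · exact ⟨1, 0, by simp, by simp [ha]⟩
  · obtain ⟨x, hx⟩ := IsAlgClosed.exists_root
      (Polynomial.C a * Polynomial.X ^ 2 + Polynomial.C b * Polynomial.X + Polynomial.C c)
      (by rw [Polynomial.degree_quadratic ha]; decide)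
    refine ⟨x, 1, by simp, ?_⟩
    simpa using hx

theorem exists_conicEval_eq_zero_of_linearIndependent (q : Fin 6 → L) {v w : Fin 3 → L}
    (h : LinearIndependent L ![v, w]) :
    ∃ u ∈ Submodule.span L {v, w}, u ≠ 0 ∧ conicEval q u = 0 := by
  obtain ⟨x, y, hxy, hq⟩ := exists_binaryQuadratic_eq_zero (conicEval q v) (conicPolar q v w)
    (conicEval q w)
  refine ⟨x • v + y • w, Submodule.mem_span_pair.2 ⟨x, y, rfl⟩, fun h0 => ?_,
    by rw [conicEval_smul_add_smul, hq]⟩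
  obtain ⟨rfl, rfl⟩ := LinearIndependent.pair_iff.1 h x y h0
  simp at hxy

theorem exists_line_subset_of_conicDisc_eq_zero {q : Fin 6 → L} (h0 : q 0 = 0)
    (hq : conicDisc q = 0) :
    ∃ v w : Fin 3 → L, LinearIndependent L ![v, w] ∧
      ∀ u ∈ Submodule.span L {v, w}, conicEval q u = 0 := by
  obtain ⟨y, z, hyz, hpolar, heval⟩ : ∃ y z : L, (y ≠ 0 ∨ z ≠ 0) ∧ q 3 * y + q 4 * z = 0 ∧
      q 1 * y ^ 2 + q 5 * (y * z) + q 2 * z ^ 2 = 0 := by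
    by_cases hd : q 3 = 0 ∧ q 4 = 0
    · obtain ⟨y, z, hyz, h⟩ := exists_binaryQuadratic_eq_zero (q 1) (q 5) (q 2)
      exact ⟨y, z, hyz, by simp [hd], h⟩
    · refine ⟨q 4, -q 3, ?_, by ring, ?_⟩
      · rw [neg_ne_zero]
        tauto
      · simp only [conicDisc, h0] at hq
        linear_combination -hq
  refine ⟨![1, 0, 0], ![0, y, z], LinearIndependent.pair_iff.2 fun s t hst => ?_, fun u hu => ?_⟩
  · have hs := congrFun hst 0
    have hy := congrFun hst 1
    have hz := congrFun hst 2
    simp only [Pi.add_apply, Pi.smul_apply, cons_val, smul_eq_mul, mul_one, mul_zero, add_zero,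
      zero_add, Pi.zero_apply, mul_eq_zero] at hs hy hz
    tauto
  · obtain ⟨s, t, rfl⟩ := Submodule.mem_span_pair.1 hu
    rw [conicEval_smul_add_smul]
    simp [conicEval, conicPolar, h0]
    linear_combination s * t * hpolar + t ^ 2 * heval

theorem exists_common_zero_of_conicDisc_eq_zero {q : Fin 6 → L} (hq : conicDisc q = 0)
    (r : Fin 6 → L) : ∃ v ≠ 0, conicEval q v = 0 ∧ conicEval r v = 0 := by
  obtain ⟨p, -, hp0, hp⟩ := exists_conicEval_eq_zero_of_linearIndependent q
    (v := ![1, 0, 0]) (w := ![0, 1, 0]) (by simp [LinearIndependent.pair_iff])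
  obtain ⟨B, x, hB⟩ := exists_specialLinearGroup_col_eq_smul (0 : Fin 3) hp0
  obtain ⟨v, w, hvw, hline⟩ := exists_line_subset_of_conicDisc_eq_zero
    (q := conicSub B.1 q)
    (by rw [conicSub_apply, cons_val_zero, hB, conicEval_smul_right, hp, mul_zero])
    (by rw [conicDisc_conicSub, hq, mul_zero])
  obtain ⟨u, hu, hu0, hru⟩ := exists_conicEval_eq_zero_of_linearIndependent (conicSub B.1 r) hvw
  refine ⟨B.1 *ᵥ u, fun h => hu0 ?_, ?_, ?_⟩
  · exact eq_zero_of_mulVec_eq_zero (by simp) h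
  · rw [← conicEval_conicSub, hline u hu]
  · rw [← conicEval_conicSub, hru]

end CommonPoints

section BinaryForms

variable {R : Type*} [CommRing R]

/-- The value of the binary cubic form `aW³ + bUW² + cU²W + dU³`. Binary cubic forms in `(U, W)`
are encoded by their dehomogenisation at `U = 1`. -/
def cubicEval (f : Cubic R) (u w : R) : R :=
  f.a * w ^ 3 + f.b * u * w ^ 2 + f.c * u ^ 2 * w + f.d * u ^ 3

theorem conicDisc_smul_add_smul (q r : Fin 6 → R) (x y : R) :
    conicDisc (x • q + y • r)
      = cubicEval ⟨conicDisc r, conicDiscMix r q, conicDiscMix q r, conicDisc q⟩ x y := by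
  simp only [conicDisc, conicDiscMix, cubicEval, Pi.add_apply, Pi.smul_apply, smul_eq_mul]
  ring

/-- The linear substitution of `(U, W)` by the matrix `M` in a binary cubic form. -/
def cubicSub (M : Matrix (Fin 2) (Fin 2) R) (f : Cubic R) : Cubic R where
  a := cubicEval f (M 0 1) (M 1 1)
  b := 3 * f.a * M 1 0 * M 1 1 ^ 2 + f.b * (M 0 0 * M 1 1 ^ 2 + 2 * M 0 1 * M 1 0 * M 1 1)
    + f.c * (2 * M 0 0 * M 0 1 * M 1 1 + M 0 1 ^ 2 * M 1 0) + 3 * f.d * M 0 0 * M 0 1 ^ 2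
  c := 3 * f.a * M 1 0 ^ 2 * M 1 1 + f.b * (2 * M 0 0 * M 1 0 * M 1 1 + M 0 1 * M 1 0 ^ 2)
    + f.c * (M 0 0 ^ 2 * M 1 1 + 2 * M 0 0 * M 0 1 * M 1 0) + 3 * f.d * M 0 0 ^ 2 * M 0 1
  d := cubicEval f (M 0 0) (M 1 0)

theorem discr_cubicSub (M : Matrix (Fin 2) (Fin 2) R) (f : Cubic R) :
    (cubicSub M f).discr = M.det ^ 6 * f.discr := by
  simp only [Cubic.discr, cubicSub, cubicEval, det_fin_two]
  ring

/-- The coefficients of `U⁴, U³W, …, W⁴` in the product of the linear form `l₀U + l₁W` and the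
binary cubic form `f`. -/
def quarticOfCubic (l : Fin 2 → R) (f : Cubic R) : Fin 5 → R :=
  ![l 0 * f.d, l 0 * f.c + l 1 * f.d, l 0 * f.b + l 1 * f.c, l 0 * f.a + l 1 * f.b, l 1 * f.a]

/-- The quadratic invariant of binary quartic forms. -/
def quarticI (q : Fin 5 → R) : R := 12 * q 0 * q 4 - 3 * q 1 * q 3 + q 2 ^ 2

/-- The cubic invariant of binary quartic forms. -/
def quarticJ (q : Fin 5 → R) : R :=
  72 * q 0 * q 2 * q 4 + 9 * q 1 * q 2 * q 3 - 27 * q 0 * q 3 ^ 2 - 27 * q 1 ^ 2 * q 4 - 2 * q 2 ^ 3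

/-- The binary quartic discriminant `disc₄`, characterised over `ℤ` by
`27 * quarticDisc q = 4 * quarticI q ^ 3 - quarticJ q ^ 2`. -/
def quarticDisc (q : Fin 5 → R) : R :=
  256 * q 0 ^ 3 * q 4 ^ 3 - 192 * q 0 ^ 2 * q 1 * q 3 * q 4 ^ 2 - 128 * q 0 ^ 2 * q 2 ^ 2 * q 4 ^ 2
    + 144 * q 0 ^ 2 * q 2 * q 3 ^ 2 * q 4 - 27 * q 0 ^ 2 * q 3 ^ 4
    + 144 * q 0 * q 1 ^ 2 * q 2 * q 4 ^ 2 - 6 * q 0 * q 1 ^ 2 * q 3 ^ 2 * q 4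
    - 80 * q 0 * q 1 * q 2 ^ 2 * q 3 * q 4 + 18 * q 0 * q 1 * q 2 * q 3 ^ 3
    + 16 * q 0 * q 2 ^ 4 * q 4 - 4 * q 0 * q 2 ^ 3 * q 3 ^ 2 - 27 * q 1 ^ 4 * q 4 ^ 2
    + 18 * q 1 ^ 3 * q 2 * q 3 * q 4 - 4 * q 1 ^ 3 * q 3 ^ 3 - 4 * q 1 ^ 2 * q 2 ^ 3 * q 4
    + q 1 ^ 2 * q 2 ^ 2 * q 3 ^ 2

theorem quarticDisc_quarticOfCubic (l : Fin 2 → R) (f : Cubic R) :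
    quarticDisc (quarticOfCubic l f) = cubicEval f (l 1) (-l 0) ^ 2 * f.discr := by
  simp only [quarticDisc, quarticOfCubic, cubicEval, Cubic.discr, cons_val]
  ring

theorem quarticI_quarticOfCubic_one_zero (f : Cubic R) :
    quarticI (quarticOfCubic ![1, 0] f) = f.b ^ 2 - 3 * f.a * f.c := by
  simp only [quarticI, quarticOfCubic, cons_val]
  ring

theorem quarticJ_quarticOfCubic_one_zero (f : Cubic R) :
    quarticJ (quarticOfCubic ![1, 0] f)
      = 9 * f.a * f.b * f.c - 27 * f.a ^ 2 * f.d - 2 * f.b ^ 3 := by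
  simp only [quarticJ, quarticOfCubic, cons_val]
  ring

variable (M : Matrix (Fin 2) (Fin 2) R) (s : R) (l : Fin 2 → R) (f : Cubic R)

theorem quarticI_quarticOfCubic_cubicSub :
    quarticI (quarticOfCubic (s • l ᵥ* M) (cubicSub M f))
      = s ^ 2 * M.det ^ 4 * quarticI (quarticOfCubic l f) := by
  simp only [quarticI, quarticOfCubic, cubicSub, cubicEval, det_fin_two, cons_val, Pi.smul_apply,
    vecMul, dotProduct, Fin.sum_univ_two, smul_eq_mul]
  ring

theorem quarticJ_quarticOfCubic_cubicSub :
    quarticJ (quarticOfCubic (s • l ᵥ* M) (cubicSub M f))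
      = s ^ 3 * M.det ^ 6 * quarticJ (quarticOfCubic l f) := by
  simp only [quarticJ, quarticOfCubic, cubicSub, cubicEval, det_fin_two, cons_val, Pi.smul_apply,
    vecMul, dotProduct, Fin.sum_univ_two, smul_eq_mul]
  ring

theorem quarticDisc_quarticOfCubic_cubicSub :
    quarticDisc (quarticOfCubic (s • l ᵥ* M) (cubicSub M f))
      = s ^ 6 * M.det ^ 12 * quarticDisc (quarticOfCubic l f) := by
  have hroot : cubicEval (cubicSub M f) ((s • l ᵥ* M) 1) (-(s • l ᵥ* M) 0)
      = s ^ 3 * M.det ^ 3 * cubicEval f (l 1) (-l 0) := by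
    simp only [cubicSub, cubicEval, det_fin_two, Pi.smul_apply, vecMul, dotProduct,
      Fin.sum_univ_two, smul_eq_mul]
    ring
  rw [quarticDisc_quarticOfCubic, quarticDisc_quarticOfCubic, hroot, discr_cubicSub]
  ring

end BinaryForms

section MonicCubics

/-- The substitution `W ↦ W + sU`. -/
def shear {R : Type*} [CommRing R] (s : R) : SL(2, R) := ⟨!![1, 0; s, 1], by simp⟩

theorem cubicSub_shear {R : Type*} [CommRing R] (s : R) (f : Cubic R) :
    cubicSub (shear s).1 f
      = ⟨f.a, f.b + 3 * f.a * s, f.c + 2 * f.b * s + 3 * f.a * s ^ 2, cubicEval f 1 s⟩ := by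
  ext <;> simp [cubicSub, cubicEval, shear] <;> ring

variable {L : Type*} [Field L]

theorem exists_cubicSub_shear_eq_of_three_ne_zero (h3 : (3 : L) ≠ 0) {f g : Cubic L}
    (hf : f.a = 1) (hg : g.a = 1)
    (hI : quarticI (quarticOfCubic ![1, 0] f) = quarticI (quarticOfCubic ![1, 0] g))
    (hJ : quarticJ (quarticOfCubic ![1, 0] f) = quarticJ (quarticOfCubic ![1, 0] g)) :
    ∃ s, cubicSub (shear s).1 f = g := by
  rw [quarticI_quarticOfCubic_one_zero, quarticI_quarticOfCubic_one_zero, hf, hg] at hI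
  rw [quarticJ_quarticOfCubic_one_zero, quarticJ_quarticOfCubic_one_zero, hf, hg] at hJ
  obtain ⟨s, hs⟩ : ∃ s, g.b = f.b + 3 * s := ⟨(g.b - f.b) / 3, by field_simp; ring⟩
  rw [hs] at hI hJ
  have hc : g.c = f.c + 2 * f.b * s + 3 * s ^ 2 := by
    apply mul_left_cancel₀ h3
    linear_combination hI
  rw [hc] at hJ
  have hd : g.d = f.d + f.c * s + f.b * s ^ 2 + s ^ 3 := by
    apply mul_left_cancel₀ (pow_ne_zero 3 h3)
    linear_combination hJ
  refine ⟨s, ?_⟩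
  ext <;> simp [cubicSub_shear, cubicEval, hf, hg, hs, hc, hd]
  ring

theorem exists_cubicSub_shear_eq_of_b_ne_zero (h3 : (3 : L) = 0) {f g : Cubic L}
    (hf : f.a = 1) (hg : g.a = 1) (hb0 : f.b ≠ 0) (hb : f.b = g.b) (hD : f.discr = g.discr) :
    ∃ s, cubicSub (shear s).1 f = g := by
  obtain ⟨s, hs⟩ : ∃ s, f.b * s = f.c - g.c := ⟨_, mul_div_cancel₀ _ hb0⟩
  have hsub : cubicSub (shear s).1 f = ⟨1, f.b, g.c, cubicEval f 1 s⟩ := by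
    ext <;> simp only [cubicSub_shear, hf]
    · linear_combination s * h3
    · linear_combination -hs + (f.b * s + s ^ 2) * h3
  have hd : cubicEval f 1 s = g.d := by
    have hD' := discr_cubicSub (shear s).1 f
    rw [(shear s).det_coe, one_pow, one_mul, hD, hsub] at hD'
    simp only [Cubic.discr, hg, ← hb] at hD'
    apply mul_left_cancel₀ (pow_ne_zero 3 hb0)
    linear_combination -hD' + h3 * (6 * f.b * g.c * (cubicEval f 1 s - g.d)
      - 9 * (cubicEval f 1 s ^ 2 - g.d ^ 2) - f.b ^ 3 * (cubicEval f 1 s - g.d))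
  exact ⟨s, by rw [hsub, hd, hb, ← hg]⟩

variable [IsAlgClosed L]

theorem exists_cubicSub_shear_eq_of_b_eq_zero (h3 : (3 : L) = 0) {f g : Cubic L}
    (hf : f.a = 1) (hg : g.a = 1) (hfb : f.b = 0) (hgb : g.b = 0) (hD : f.discr = g.discr) :
    ∃ s, cubicSub (shear s).1 f = g := by
  have hc : f.c = g.c := by
    simp only [Cubic.discr, hf, hg, hfb, hgb] at hD
    refine sub_eq_zero.1 (pow_eq_zero_iff three_ne_zero |>.1 ?_)
    linear_combination -hD - h3 * (f.c ^ 3 - g.c ^ 3 + 9 * (f.d ^ 2 - g.d ^ 2)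
      + f.c ^ 2 * g.c - f.c * g.c ^ 2)
  obtain ⟨s, hs⟩ := IsAlgClosed.exists_root (Cubic.toPoly ⟨1, 0, f.c, f.d - g.d⟩)
    (by rw [Cubic.degree_of_a_ne_zero one_ne_zero]; decide)
  simp only [Cubic.toPoly, Polynomial.IsRoot.def, Polynomial.eval_add, Polynomial.eval_mul,
    Polynomial.eval_C, Polynomial.eval_pow, Polynomial.eval_X] at hs
  refine ⟨s, ?_⟩
  ext <;> simp only [cubicSub_shear, cubicEval, hf, hg, hfb, hgb]
  · linear_combination s * h3
  · linear_combination hc + s ^ 2 * h3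
  · linear_combination hs

/- In characteristic `3` the first two invariants only determine the coefficient `b`, which no
shear can change; the discriminant then determines the cubic up to a shear. -/
theorem exists_cubicSub_shear_eq {f g : Cubic L} (hf : f.a = 1) (hg : g.a = 1)
    (hI : quarticI (quarticOfCubic ![1, 0] f) = quarticI (quarticOfCubic ![1, 0] g))
    (hJ : quarticJ (quarticOfCubic ![1, 0] f) = quarticJ (quarticOfCubic ![1, 0] g))
    (hD : f.discr = g.discr) :
    ∃ s, cubicSub (shear s).1 f = g := by
  by_cases h3 : (3 : L) = 0
  · have hb : f.b = g.b := by
      rw [quarticJ_quarticOfCubic_one_zero, quarticJ_quarticOfCubic_one_zero, hf, hg] at hJ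
      refine sub_eq_zero.1 (pow_eq_zero_iff three_ne_zero |>.1 ?_)
      linear_combination hJ + h3 * (f.b ^ 3 - g.b ^ 3 - 3 * (f.b * f.c - g.b * g.c)
        + 9 * (f.d - g.d) - f.b ^ 2 * g.b + f.b * g.b ^ 2)
    rcases eq_or_ne f.b 0 with hb0 | hb0
    · exact exists_cubicSub_shear_eq_of_b_eq_zero h3 hf hg hb0 (hb ▸ hb0) hD
    · exact exists_cubicSub_shear_eq_of_b_ne_zero h3 hf hg hb0 hb hD
  · exact exists_cubicSub_shear_eq_of_three_ne_zero h3 hf hg hI hJ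

theorem exists_injective_cubicEval_eq_zero {f : Cubic L} (ha : f.a ≠ 0) (hf : f.discr ≠ 0) :
    ∃ e : Fin 3 → L, Injective e ∧ ∀ i, cubicEval f 1 (e i) = 0 := by
  obtain ⟨x, y, z, hroots⟩ :=
    (Cubic.splits_iff_roots_eq_three (φ := RingHom.id L) ha).1 (IsAlgClosed.splits _)
  obtain ⟨hxy, hxz, hyz⟩ := (Cubic.discr_ne_zero_iff_roots_ne ha hroots).1 hf
  have heval {r : L} (hr : r ∈ (f.map (RingHom.id L)).roots) : cubicEval f 1 r = 0 := by
    simpa [cubicEval, Cubic.map] using (Cubic.mem_roots_iff (Cubic.ne_zero_of_a_ne_zero ha) r).1 hr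
  refine ⟨![x, y, z], ?_, fun i => heval ?_⟩
  · intro i j h
    fin_cases i <;> fin_cases j <;> simp_all
  · rw [hroots]
    fin_cases i <;> simp

end MonicCubics

/-- The group `G₄`. -/
abbrev G4 (R : Type*) [CommRing R] : Type _ := SL(2, R) × SL(3, R) × Rˣ

/-- A pair `(F, G)` in `V₄`, written as `F = U·qU + W·qW` and `G = mU + nW`: the pencil of conics
`F` together with the point `(n : -m)` of its parameter line at which `G` vanishes. -/
@[ext]
structure PointedPencil (R : Type*) where
  qU : Fin 6 → R
  qW : Fin 6 → R
  m : R
  n : R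

namespace PointedPencil

section Coordinates

/-- The coordinates `a, …, n` of an element of `V₄`. -/
def coords {R : Type*} : PointedPencil R ≃ (Fin 14 → R) where
  toFun P := ![P.qU 0, P.qW 0, P.qU 1, P.qW 1, P.qU 2, P.qW 2, P.qU 3, P.qW 3, P.qU 4, P.qW 4,
    P.qU 5, P.qW 5, P.m, P.n]
  invFun c := ⟨![c 0, c 2, c 4, c 6, c 8, c 10], ![c 1, c 3, c 5, c 7, c 9, c 11], c 12, c 13⟩
  left_inv P := by ext i <;> first | rfl | (fin_cases i <;> rfl)
  right_inv c := by ext i; fin_cases i <;> rfl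

/-- The change of coefficients along `f`. -/
def map {R S : Type*} (f : R → S) (P : PointedPencil R) : PointedPencil S :=
  ⟨f ∘ P.qU, f ∘ P.qW, f P.m, f P.n⟩

theorem coords_map {R S : Type*} (f : R → S) (P : PointedPencil R) :
    (P.map f).coords = f ∘ P.coords := by
  ext i
  fin_cases i <;> rfl

variable {R : Type*} [CommRing R]

theorem eval_toV4_coords (P : PointedPencil R) (u w : R) (v : Fin 3 → R) :
    ((toV4 P.coords).map (MvPolynomial.eval (Sum.elim ![u, w] v))
      (MvPolynomial.eval (Sum.elim ![u, w] v)))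
      = (u * conicEval P.qU v + w * conicEval P.qW v, u * P.m + w * P.n) := by
  simp [toV4, coords, conicEval]
  constructor <;> ring

theorem toV4_coords_injective : Injective fun P : PointedPencil R => toV4 P.coords := by
  intro P Q h
  have heval (u w : R) (v : Fin 3 → R) :
      (u * conicEval P.qU v + w * conicEval P.qW v, u * P.m + w * P.n)
        = (u * conicEval Q.qU v + w * conicEval Q.qW v, u * Q.m + w * Q.n) := by
    rw [← eval_toV4_coords, ← eval_toV4_coords]
    exact congrArg _ h
  have hU (v : Fin 3 → R) := heval 1 0 v
  have hW (v : Fin 3 → R) := heval 0 1 v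
  simp only [one_mul, zero_mul, add_zero, zero_add, Prod.mk.injEq, forall_and] at hU hW
  exact PointedPencil.ext (conicEval_injective (funext hU.1)) (conicEval_injective (funext hW.1))
    (hU.2 0) (hW.2 0)

end Coordinates

section Action

variable {R : Type*} [CommRing R]

/-- Substituting `A` and then `A'` amounts to substituting `A * A'`, so that `act4` is a right
action. -/
instance : SMul (G4 R)ᵐᵒᵖ (PointedPencil R) where
  smul g P :=
    { qU := g.unop.2.2⁻¹.val • conicSub g.unop.2.1 (g.unop.1 0 0 • P.qU + g.unop.1 1 0 • P.qW)
      qW := g.unop.2.2⁻¹.val • conicSub g.unop.2.1 (g.unop.1 0 1 • P.qU + g.unop.1 1 1 • P.qW)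
      m := g.unop.2.2.val ^ 3 * (g.unop.1 0 0 * P.m + g.unop.1 1 0 * P.n)
      n := g.unop.2.2.val ^ 3 * (g.unop.1 0 1 * P.m + g.unop.1 1 1 * P.n) }

theorem op_smul (A : SL(2, R)) (B : SL(3, R)) (t : Rˣ) (P : PointedPencil R) :
    (op (A, B, t) : (G4 R)ᵐᵒᵖ) • P =
      ⟨t⁻¹.val • conicSub B (A 0 0 • P.qU + A 1 0 • P.qW),
        t⁻¹.val • conicSub B (A 0 1 • P.qU + A 1 1 • P.qW),
        t.val ^ 3 * (A 0 0 * P.m + A 1 0 * P.n), t.val ^ 3 * (A 0 1 * P.m + A 1 1 * P.n)⟩ := rfl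

instance : MulAction (G4 R)ᵐᵒᵖ (PointedPencil R) where
  one_smul P := by
    change op ((1 : SL(2, R)), (1 : SL(3, R)), (1 : Rˣ)) • P = P
    simp [op_smul, conicSub_one]
  mul_smul := by
    rintro ⟨A, B, t⟩ ⟨A', B', t'⟩ P
    change op (A' * A, B' * B, t' * t) • P = op (A, B, t) • op (A', B', t') • P
    simp only [op_smul, mk.injEq, Matrix.SpecialLinearGroup.coe_mul, mul_apply, Fin.sum_univ_two,
      mul_inv, Units.val_mul, ← conicSub_conicSub, map_add, map_smul]
    refine ⟨by module, by module, by ring, by ring⟩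

instance : Setoid (PointedPencil R) := MulAction.orbitRel (G4 R)ᵐᵒᵖ (PointedPencil R)

theorem smul_equiv (g : (G4 R)ᵐᵒᵖ) (P : PointedPencil R) : g • P ≈ P :=
  MulAction.mem_orbit P g

variable {L : Type*} [Field L]

theorem act4_toV4_coords (g : G4 L) (P : PointedPencil L) :
    act4 g (toV4 P.coords) = toV4 (op g • P).coords := by
  obtain ⟨A, B, t⟩ := g
  rw [op_smul]
  refine Prod.ext ?_ ?_ <;>
  · simp only [act4, sub4, toV4, coords, Equiv.coe_fn_mk, conicSub_apply, conicEval, conicPolar,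
      Units.val_inv_eq_inv_val, col_apply, cons_val, map_add, map_mul, map_pow,
      MvPolynomial.aeval_X, MvPolynomial.algHom_C, Sum.elim_inl, Sum.elim_inr, Fin.sum_univ_two,
      Fin.sum_univ_three, Pi.add_apply, Pi.smul_apply, smul_eq_mul, MvPolynomial.smul_eq_C_mul,
      MvPolynomial.algebraMap_eq, map_ofNat]
    ring

theorem act4_toV4_coords_eq_iff {g : G4 L} {P Q : PointedPencil L} :
    act4 g (toV4 P.coords) = toV4 Q.coords ↔ op g • P = Q := by
  rw [act4_toV4_coords]
  exact toV4_coords_injective.eq_iff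

theorem stable4_coords_iff {P : PointedPencil L} :
    Stable4 P.coords ↔ IsZariskiClosed {c | coords.symm c ≈ P} ∧
      (MulAction.stabilizer (G4 L)ᵐᵒᵖ P : Set (G4 L)ᵐᵒᵖ).Finite := by
  have horbit (c : Fin 14 → L) :
      (∃ g, toV4 c = act4 g (toV4 P.coords)) ↔ coords.symm c ≈ P := by
    conv_lhs => rw [← coords.apply_symm_apply c]
    simp only [eq_comm (a := toV4 _), act4_toV4_coords_eq_iff]
    exact op_surjective.exists (p := fun g : (G4 L)ᵐᵒᵖ => g • P = coords.symm c).symm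
  have hstab : {g | act4 g (toV4 P.coords) = toV4 P.coords}
      = op ⁻¹' (MulAction.stabilizer (G4 L)ᵐᵒᵖ P : Set (G4 L)ᵐᵒᵖ) := by
    ext g
    exact act4_toV4_coords_eq_iff
  simp only [Stable4, horbit, hstab]
  exact and_congr_right fun _ =>
    ⟨fun h => h.of_preimage op_surjective, fun h => h.preimage op_injective.injOn⟩

end Action

section Invariants

variable {R : Type*} [CommRing R]

/-- The binary cubic form `disc₂(U·qU + W·qW)`. -/
def discCubic (P : PointedPencil R) : Cubic R :=
  ⟨conicDisc P.qW, conicDiscMix P.qW P.qU, conicDiscMix P.qU P.qW, conicDisc P.qU⟩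

theorem cubicEval_discCubic (P : PointedPencil R) (u w : R) :
    cubicEval P.discCubic u w = conicDisc (u • P.qU + w • P.qW) :=
  (conicDisc_smul_add_smul ..).symm

/-- The binary quartic form `G · disc₂(F)`. -/
def quartic (P : PointedPencil R) : Fin 5 → R := quarticOfCubic ![P.m, P.n] P.discCubic

/-- The discriminant `Δ₄`. -/
def disc (P : PointedPencil R) : R := quarticDisc P.quartic

/-- The invariants of the binary quartic form `G · disc₂(F)`. They separate the orbits on which
`disc` does not vanish. -/
def invariants (P : PointedPencil R) : Fin 3 → R :=
  ![quarticI P.quartic, quarticJ P.quartic, P.disc]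

theorem discCubic_op_smul (A : SL(2, R)) (B : SL(3, R)) (t : Rˣ) (P : PointedPencil R) :
    ((op (A, B, t) : (G4 R)ᵐᵒᵖ) • P).discCubic = cubicSub (t⁻¹.val • A.1) P.discCubic := by
  simp only [op_smul, discCubic, ← map_smul]
  simp only [conicDisc_conicSub, conicDiscMix_conicSub, B.det_coe]
  simp only [cubicSub, cubicEval, conicDisc, conicDiscMix, Pi.add_apply, Pi.smul_apply,
    Matrix.smul_apply, smul_eq_mul, Cubic.mk.injEq]
  refine ⟨by ring, by ring, by ring, by ring⟩

theorem invariants_smul (g : (G4 R)ᵐᵒᵖ) (P : PointedPencil R) :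
    (g • P).invariants = P.invariants := by
  obtain ⟨A, B, t⟩ := g
  change (op (A, B, t) • P).invariants = P.invariants
  have hl : ![(op (A, B, t) • P).m, (op (A, B, t) • P).n]
      = t.val ^ 4 • ![P.m, P.n] ᵥ* (t⁻¹.val • A.1) := by
    have ht : t.val ^ 4 * t⁻¹.val = t.val ^ 3 := by rw [pow_succ, Units.mul_inv_cancel_right]
    rw [vecMul_smul, smul_smul, ht]
    ext i
    fin_cases i <;> simp [op_smul, vecMul, dotProduct, mul_comm]
  have hdet : (t⁻¹.val • A.1).det = t⁻¹.val ^ 2 := by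
    rw [det_smul, A.det_coe, mul_one, Fintype.card_fin]
  have hpow (k : ℕ) : (t.val ^ 4) ^ k * (t⁻¹.val ^ 2) ^ (2 * k) = 1 := by
    rw [← pow_mul, ← pow_mul, show 2 * (2 * k) = 4 * k by ring, ← mul_pow, Units.mul_inv, one_pow]
  simp only [invariants, disc, quartic, discCubic_op_smul, hl, quarticI_quarticOfCubic_cubicSub,
    quarticJ_quarticOfCubic_cubicSub, quarticDisc_quarticOfCubic_cubicSub, hdet, hpow 2, hpow 3,
    hpow 6, one_mul]

theorem invariants_eq_of_equiv {P Q : PointedPencil R} (h : P ≈ Q) :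
    P.invariants = Q.invariants := by
  obtain ⟨g, rfl⟩ := h
  exact invariants_smul g Q

end Invariants

section Closed

variable {R : Type*} [CommRing R]

theorem invariants_map {S : Type*} [CommRing S] (f : R →+* S) (P : PointedPencil R) (i : Fin 3) :
    (P.map f).invariants i = f (P.invariants i) := by
  fin_cases i <;>
    simp [invariants, disc, quartic, quarticI, quarticJ, quarticDisc, quarticOfCubic, discCubic,
      conicDisc, conicDiscMix, map, map_ofNat]

theorem map_eval_symm_X (c : Fin 14 → R) :
    (coords.symm MvPolynomial.X).map (MvPolynomial.eval c) = coords.symm c := by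
  rw [← coords.symm_apply_apply (map _ _), coords_map, coords.apply_symm_apply]
  exact congrArg coords.symm (funext fun i => MvPolynomial.eval_X i)

theorem isZariskiClosed_setOf_invariants_eq (a : Fin 3 → R) :
    IsZariskiClosed {c | (coords.symm c).invariants = a} := by
  simpa only [← invariants_map, map_eval_symm_X, funext_iff]
    using isZariskiClosed_setOf_eval_eq (coords.symm MvPolynomial.X).invariants a

end Closed

section Monic

variable {L : Type*} [Field L] {P Q : PointedPencil L}

/-- A pointed pencil with `G = U` for which the binary cubic `disc₂(F)` is monic in `W`. -/
structure IsMonic (P : PointedPencil L) : Prop where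
  m_eq : P.m = 1
  n_eq : P.n = 0
  disc_qW : conicDisc P.qW = 1

theorem disc_eq (P : PointedPencil L) :
    P.disc = conicDisc (P.n • P.qU + (-P.m) • P.qW) ^ 2 * P.discCubic.discr := by
  rw [← cubicEval_discCubic]
  exact quarticDisc_quarticOfCubic ..

theorem disc_eq_of_equiv (h : P ≈ Q) : P.disc = Q.disc :=
  congrFun (invariants_eq_of_equiv h) 2

theorem exists_equiv_linear_eq_U (h : P.disc ≠ 0) : ∃ Q, Q ≈ P ∧ Q.m = 1 ∧ Q.n = 0 := by
  obtain ⟨x, y, hxy⟩ : ∃ x y, x * P.m + y * P.n = 1 := by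
    rcases eq_or_ne P.m 0 with hm | hm
    · have hn : P.n ≠ 0 := fun hn => h <| by
        rw [disc_eq, hm, hn, neg_zero, zero_smul, zero_smul, add_zero, conicDisc]
        simp
      exact ⟨0, P.n⁻¹, by simp [hn]⟩
    · exact ⟨P.m⁻¹, 0, by simp [hm]⟩
  let A : SL(2, L) := ⟨!![x, -P.n; y, P.m], by rw [det_fin_two_of, ← hxy]; ring⟩
  refine ⟨(op (A, 1, 1) : (G4 L)ᵐᵒᵖ) • P, smul_equiv _ _, ?_, ?_⟩
  · simp only [op_smul]
    simp [A, hxy]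
  · simp only [op_smul]
    simp [A, mul_comm]

theorem exists_isMonic_equiv [IsAlgClosed L] (h : P.disc ≠ 0) : ∃ Q, Q ≈ P ∧ Q.IsMonic := by
  obtain ⟨Q, hQP, hm, hn⟩ := exists_equiv_linear_eq_U h
  have hW : conicDisc Q.qW ≠ 0 := by
    intro hW
    apply h
    rw [← disc_eq_of_equiv hQP, disc_eq, ← cubicEval_discCubic]
    simp [hm, hn, cubicEval, discCubic, hW]
  obtain ⟨t, ht⟩ := IsAlgClosed.exists_pow_nat_eq (conicDisc Q.qW)⁻¹ (n := 6) (by norm_num)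
  have ht0 : t ≠ 0 := by
    rintro rfl
    simp [eq_comm, hW] at ht
  let A : SL(2, L) := ⟨!![(t ^ 3)⁻¹, 0; 0, t ^ 3], by simp [ht0]⟩
  refine ⟨(op (A, 1, Units.mk0 t ht0) : (G4 L)ᵐᵒᵖ) • Q, Setoid.trans (smul_equiv _ _) hQP,
    ?_, ?_, ?_⟩
  · simp only [op_smul]
    simp [A, hm, hn, ht0]
  · simp only [op_smul]
    simp [A, hn]
  · have hdisc : conicDisc ((t⁻¹ * t ^ 3) • Q.qW) = 1 := by
      rw [conicDisc_smul, ← inv_inv (conicDisc Q.qW), ← ht]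
      field_simp
    simp only [op_smul]
    simpa [A, conicSub_one, smul_smul] using hdisc

theorem IsMonic.discCubic_a (h : P.IsMonic) : P.discCubic.a = 1 := h.disc_qW

theorem IsMonic.quartic_eq (h : P.IsMonic) :
    P.quartic = quarticOfCubic ![1, 0] P.discCubic := by
  rw [quartic, h.m_eq, h.n_eq]

theorem IsMonic.disc_eq_discr (h : P.IsMonic) : P.disc = P.discCubic.discr := by
  rw [disc, h.quartic_eq, quarticDisc_quarticOfCubic]
  simp only [cubicEval, h.discCubic_a, cons_val]
  ring

theorem IsMonic.shear_smul (h : P.IsMonic) (s : L) :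
    ((op (shear s, 1, 1) : (G4 L)ᵐᵒᵖ) • P).IsMonic where
  m_eq := by
    simp only [op_smul]
    simp [shear, h.m_eq, h.n_eq]
  n_eq := by
    simp only [op_smul]
    simp [shear, h.n_eq]
  disc_qW := by
    simp only [op_smul]
    simp [shear, conicSub_one, h.disc_qW]

theorem IsMonic.exists_equiv_discCubic_eq [IsAlgClosed L] (hP : P.IsMonic) (hQ : Q.IsMonic)
    (h : P.invariants = Q.invariants) :
    ∃ P', P' ≈ P ∧ P'.IsMonic ∧ P'.discCubic = Q.discCubic := by
  have hI : quarticI P.quartic = quarticI Q.quartic := congrFun h 0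
  have hJ : quarticJ P.quartic = quarticJ Q.quartic := congrFun h 1
  have hD : P.disc = Q.disc := congrFun h 2
  rw [hP.quartic_eq, hQ.quartic_eq] at hI hJ
  rw [hP.disc_eq_discr, hQ.disc_eq_discr] at hD
  obtain ⟨s, hs⟩ := exists_cubicSub_shear_eq hP.discCubic_a hQ.discCubic_a hI hJ hD
  refine ⟨_, smul_equiv _ _, hP.shear_smul s, ?_⟩
  rw [discCubic_op_smul, inv_one, Units.val_one, one_smul, hs]

end Monic

section NormalForm

variable {L : Type*} [Field L] {P : PointedPencil L} {e : Fin 3 → L}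

/-- The normal form `F = (W - e₀U)YZ + (W - e₁U)XZ + (W - e₂U)XY`, `G = U`, for which `disc₂(F)` is
`(W - e₀U)(W - e₁U)(W - e₂U)`. -/
def split {R : Type*} [CommRing R] (e : Fin 3 → R) : PointedPencil R :=
  ⟨![0, 0, 0, -e 2, -e 1, -e 0], ![0, 0, 0, 1, 1, 1], 1, 0⟩

/-- The monic pointed pencils `P` for which the `eᵢ` are roots of `disc₂(U·qU + W·qW)` at `U = 1`,
that is, for which the conics `qU + eᵢ • qW` are singular. -/
structure IsMonicWithRoots (P : PointedPencil L) (e : Fin 3 → L) : Prop extends P.IsMonic where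
  conicDisc_eq_zero (i : Fin 3) : conicDisc (P.qU + e i • P.qW) = 0

theorem mk_conicSub_equiv (B : SL(3, L)) (P : PointedPencil L) :
    (⟨conicSub B P.qU, conicSub B P.qW, P.m, P.n⟩ : PointedPencil L) ≈ P := by
  have h : (op (1, B, 1) : (G4 L)ᵐᵒᵖ) • P = ⟨conicSub B P.qU, conicSub B P.qW, P.m, P.n⟩ := by
    simp only [op_smul]
    simp
  exact h ▸ smul_equiv _ P

theorem IsMonicWithRoots.mk_conicSub (h : P.IsMonicWithRoots e) (B : SL(3, L)) :
    IsMonicWithRoots ⟨conicSub B P.qU, conicSub B P.qW, P.m, P.n⟩ e where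
  m_eq := h.m_eq
  n_eq := h.n_eq
  disc_qW := by rw [conicDisc_conicSub, B.det_coe, h.disc_qW, one_pow, one_mul]
  conicDisc_eq_zero i := by
    rw [← map_smul, ← map_add, conicDisc_conicSub, h.conicDisc_eq_zero, mul_zero]

theorem IsMonicWithRoots.equiv_split_of_tangents_eq (h : P.IsMonicWithRoots e) (he : Injective e)
    (hU0 : P.qU 0 = 0) (hW0 : P.qW 0 = 0) (hU3 : P.qU 3 = -e 2) (hW3 : P.qW 3 = 1)
    (hU4 : P.qU 4 = -e 1) (hW4 : P.qW 4 = 1) : P ≈ split e := by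
  have hdisc (i : Fin 3) := h.conicDisc_eq_zero i
  simp only [conicDisc, Pi.add_apply, Pi.smul_apply, smul_eq_mul, hU0, hW0, hU3, hW3, hU4, hW4]
    at hdisc
  have hsub {i j : Fin 3} (hij : i ≠ j) : e i - e j ≠ 0 := sub_ne_zero.2 (he.ne hij)
  have hne : (e 1 - e 2) ^ 2 ≠ 0 := pow_ne_zero 2 (hsub (by decide))
  have hU1 : P.qU 1 = -e 2 * P.qW 1 :=
    mul_left_cancel₀ hne (by linear_combination -hdisc 2)
  have hU2 : P.qU 2 = -e 1 * P.qW 2 :=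
    mul_left_cancel₀ hne (by linear_combination -hdisc 1)
  have hW5 : P.qW 5 = 1 + P.qW 1 + P.qW 2 := by
    have hW := h.disc_qW
    simp only [conicDisc, hW0, hW3, hW4] at hW
    linear_combination hW
  have hU5 : P.qU 5 = -e 0 - e 1 * P.qW 1 - e 2 * P.qW 2 := by
    apply mul_left_cancel₀ (mul_ne_zero (hsub (i := 0) (j := 1) (by decide))
      (hsub (i := 0) (j := 2) (by decide)))
    have h0 := hdisc 0
    rw [hU1, hU2, hW5] at h0
    linear_combination h0
  let B : SL(3, L) := ⟨!![1, -P.qW 1, -P.qW 2; 0, 1, 0; 0, 0, 1], by simp [det_fin_three]⟩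
  refine Setoid.trans (Setoid.symm (mk_conicSub_equiv B P)) ?_
  have hU : conicSub B P.qU = ![0, 0, 0, -e 2, -e 1, -e 0] := by
    ext i
    fin_cases i <;> simp [conicSub_apply, conicEval, conicPolar, B, hU0, hU3, hU4, hU1, hU2, hU5]
    ring
  have hW : conicSub B P.qW = ![0, 0, 0, 1, 1, 1] := by
    ext i
    fin_cases i <;> simp [conicSub_apply, conicEval, conicPolar, B, hW0, hW3, hW4, hW5]
    ring
  rw [hU, hW, h.m_eq, h.n_eq]
  exact Setoid.refl _

theorem IsMonicWithRoots.tangents_ne (h : P.IsMonicWithRoots e) (he : Injective e)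
    (hU0 : P.qU 0 = 0) (hW0 : P.qW 0 = 0) : P.qU 3 * P.qW 4 - P.qW 3 * P.qU 4 ≠ 0 := by
  classical
  intro hδ
  have hW := h.disc_qW
  obtain ⟨k, hk3, hk4⟩ : ∃ k, P.qU 3 = -k * P.qW 3 ∧ P.qU 4 = -k * P.qW 4 := by
    by_cases h3 : P.qW 3 = 0
    · have h4 : P.qW 4 ≠ 0 := by
        intro h4
        simp [conicDisc, hW0, h3, h4] at hW
      rw [h3, zero_mul, sub_zero, mul_eq_zero, or_iff_left h4] at hδ
      exact ⟨-(P.qU 4 / P.qW 4), by simp [h3, hδ], by simp [h4]⟩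
    · refine ⟨-(P.qU 3 / P.qW 3), by simp [h3], ?_⟩
      field_simp
      linear_combination -hδ
  let l := P.qU 1 * P.qW 4 ^ 2 + P.qU 2 * P.qW 3 ^ 2 - P.qU 5 * P.qW 3 * P.qW 4
  have hmem (i : Fin 3) : e i ∈ ({k, l} : Finset L) := by
    have hfactor : (e i - k) ^ 2 * (e i - l) = 0 := by
      rw [← h.conicDisc_eq_zero i]
      simp only [conicDisc, hW0] at hW
      simp only [conicDisc, Pi.add_apply, Pi.smul_apply, smul_eq_mul, hU0, hW0, hk3, hk4, l]
      linear_combination -(e i - k) ^ 2 * e i * hW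
    simpa [sub_eq_zero] using hfactor
  have hcard : (Finset.univ.image e).card ≤ ({k, l} : Finset L).card :=
    Finset.card_le_card (by simpa [Finset.image_subset_iff] using hmem)
  rw [Finset.card_image_of_injective _ he, Finset.card_fin] at hcard
  exact absurd (hcard.trans Finset.card_le_two) (by norm_num)

theorem IsMonicWithRoots.equiv_split_of_basePoint (h : P.IsMonicWithRoots e) (he : Injective e)
    (hU0 : P.qU 0 = 0) (hW0 : P.qW 0 = 0) : P ≈ split e := by
  have hδ := h.tangents_ne he hU0 hW0
  have hne : e 1 - e 2 ≠ 0 := sub_ne_zero.2 (he.ne (by decide))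
  -- The lower right block makes `(qU₃, qU₄)` and `(qW₃, qW₄)` proportional to `(-e₂, -e₁)` and
  -- `(1, 1)`, with the same factor; the upper left entry normalises this factor.
  let B : SL(3, L) :=
    ⟨!![(e 1 - e 2) / (P.qU 3 * P.qW 4 - P.qW 3 * P.qU 4), 0, 0;
      0, (-(P.qW 4 * e 2) - P.qU 4) / (e 1 - e 2), (-(P.qW 4 * e 1) - P.qU 4) / (e 1 - e 2);
      0, (P.qW 3 * e 2 + P.qU 3) / (e 1 - e 2), (P.qW 3 * e 1 + P.qU 3) / (e 1 - e 2)], by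
      simp [det_fin_three]
      field_simp
      ring⟩
  refine Setoid.trans (Setoid.symm (mk_conicSub_equiv B P))
    ((h.mk_conicSub B).equiv_split_of_tangents_eq he ?_ ?_ ?_ ?_ ?_ ?_)
  · simp [conicSub_apply, conicEval, B, hU0]
  · simp [conicSub_apply, conicEval, B, hW0]
  all_goals
    simp [conicSub_apply, conicPolar, B, hU0, hW0]
    field_simp
    ring

variable [IsAlgClosed L]

theorem IsMonicWithRoots.equiv_split (h : P.IsMonicWithRoots e) (he : Injective e) :
    P ≈ split e := by
  obtain ⟨v, hv, hsing, hW⟩ := exists_common_zero_of_conicDisc_eq_zero (h.conicDisc_eq_zero 0) P.qW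
  have hU : conicEval P.qU v = 0 := by simpa [conicEval_add_smul, hW] using hsing
  obtain ⟨B, x, hB⟩ := exists_specialLinearGroup_col_eq_smul (0 : Fin 3) hv
  refine Setoid.trans (Setoid.symm (mk_conicSub_equiv B P))
    ((h.mk_conicSub B).equiv_split_of_basePoint he ?_ ?_) <;>
  simp [conicSub_apply, hB, conicEval_smul_right, hU, hW]

end NormalForm

section Stabilizer

variable {L : Type*} [Field L] {P : PointedPencil L} {A A' : SL(2, L)} {B B' : SL(3, L)}
  {t : Lˣ}

theorem IsMonic.entries_of_smul_eq (hP : P.IsMonic) (h : (op (A, B, t) : (G4 L)ᵐᵒᵖ) • P = P) :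
    A 0 0 = (t.val ^ 3)⁻¹ ∧ A 0 1 = 0 ∧ A 1 1 = t.val ^ 3 := by
  have hm : t.val ^ 3 * A 0 0 = 1 := by
    simpa [op_smul, hP.m_eq, hP.n_eq] using congrArg PointedPencil.m h
  have h01 : A 0 1 = 0 := by
    simpa [op_smul, hP.m_eq, hP.n_eq] using congrArg PointedPencil.n h
  have hdet := A.det_coe
  rw [det_fin_two, h01, zero_mul, sub_zero] at hdet
  refine ⟨eq_inv_of_mul_eq_one_right hm, h01, ?_⟩
  linear_combination t.val ^ 3 * hdet - A 1 1 * hm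

theorem IsMonic.conicSub_qW_of_smul_eq (hP : P.IsMonic)
    (h : (op (A, B, t) : (G4 L)ᵐᵒᵖ) • P = P) : t.val ^ 2 • conicSub B P.qW = P.qW := by
  obtain ⟨-, h01, h11⟩ := hP.entries_of_smul_eq h
  have hW := congrArg qW h
  rw [op_smul, h01, h11, zero_smul, zero_add, map_smul, smul_smul, pow_succ',
    Units.inv_mul_cancel_left] at hW
  exact hW

theorem IsMonic.conicSub_qU_of_smul_eq (hP : P.IsMonic)
    (h : (op (A, B, t) : (G4 L)ᵐᵒᵖ) • P = P) :
    conicSub B P.qU + (t.val * A 1 0) • P.qW = t.val ^ 4 • P.qU := by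
  obtain ⟨h00, -, -⟩ := hP.entries_of_smul_eq h
  have hU := congrArg qU h
  rw [op_smul, h00, map_add, map_smul, map_smul] at hU
  have ht := t.ne_zero
  calc conicSub B P.qU + (t.val * A 1 0) • P.qW
      = conicSub B P.qU + (t.val * A 1 0) • t.val ^ 2 • conicSub B P.qW := by
        rw [hP.conicSub_qW_of_smul_eq h]
    _ = t.val ^ 4 • t⁻¹.val • ((t.val ^ 3)⁻¹ • conicSub B P.qU + A 1 0 • conicSub B P.qW) := by
        rw [Units.val_inv_eq_inv_val]
        match_scalars <;> field_simp
    _ = t.val ^ 4 • P.qU := congrArg (t.val ^ 4 • ·) hU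

theorem IsMonic.pow_six_eq_one_of_smul_eq (hP : P.IsMonic)
    (h : (op (A, B, t) : (G4 L)ᵐᵒᵖ) • P = P) : t ^ 6 = 1 := by
  have hdisc := congrArg conicDisc (hP.conicSub_qW_of_smul_eq h)
  rw [conicDisc_smul, conicDisc_conicSub, B.det_coe, hP.disc_qW] at hdisc
  apply Units.ext
  rw [Units.val_pow_eq_pow_val, Units.val_one]
  linear_combination hdisc

theorem IsMonic.eq_of_smul_eq (hP : P.IsMonic) (h : (op (A, B, t) : (G4 L)ᵐᵒᵖ) • P = P)
    (h' : (op (A', B, t) : (G4 L)ᵐᵒᵖ) • P = P) : A = A' := by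
  obtain ⟨h00, h01, h11⟩ := hP.entries_of_smul_eq h
  obtain ⟨h00', h01', h11'⟩ := hP.entries_of_smul_eq h'
  have hW : P.qW ≠ 0 := fun hW => by simpa [hW, conicDisc] using hP.disc_qW
  have h10 : A 1 0 = A' 1 0 := by
    have hU := (hP.conicSub_qU_of_smul_eq h).trans (hP.conicSub_qU_of_smul_eq h').symm
    rw [add_right_inj] at hU
    exact mul_left_cancel₀ t.ne_zero (smul_left_injective L hW hU)
  ext i j
  fin_cases i <;> fin_cases j
  exacts [h00.trans h00'.symm, h01.trans h01'.symm, h10, h11.trans h11'.symm]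

open scoped LinearAlgebra.Projectivization

/-- The common points in `ℙ²` of the conics of the pencil. -/
def baseLocus (P : PointedPencil L) : Set (ℙ L (Fin 3 → L)) :=
  {x | conicEval P.qU x.rep = 0 ∧ conicEval P.qW x.rep = 0}

theorem mk_mem_baseLocus {v : Fin 3 → L} (hv : v ≠ 0) :
    Projectivization.mk L v hv ∈ P.baseLocus ↔ conicEval P.qU v = 0 ∧ conicEval P.qW v = 0 := by
  obtain ⟨x, hx⟩ := Projectivization.exists_smul_eq_mk_rep L v hv
  simp [baseLocus, ← hx, Units.smul_def, conicEval_smul_right]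

theorem IsMonic.smul_mem_baseLocus (hP : P.IsMonic) (h : (op (A, B, t) : (G4 L)ᵐᵒᵖ) • P = P)
    {x : ℙ L (Fin 3 → L)} (hx : x ∈ P.baseLocus) : B • x ∈ P.baseLocus := by
  induction x using Projectivization.ind with
  | h v hv =>
    rw [mk_mem_baseLocus] at hx
    rw [Projectivization.smul_mk, mk_mem_baseLocus]
    change conicEval P.qU (B.1 *ᵥ v) = 0 ∧ conicEval P.qW (B.1 *ᵥ v) = 0
    have hU := congrArg (conicEval · v) (hP.conicSub_qU_of_smul_eq h)
    have hW := congrArg (conicEval · v) (hP.conicSub_qW_of_smul_eq h)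
    simpa [conicEval_add_smul, conicEval_smul_left, conicEval_conicSub, hx] using And.intro hU hW

section Split

variable {e : Fin 3 → L}

theorem isMonic_split (e : Fin 3 → L) : (split e).IsMonic :=
  ⟨rfl, rfl, by simp [split, conicDisc]⟩

/-- The base points of `split e`. -/
def splitBasePoint (e : Fin 3 → L) : Fin 4 → Fin 3 → L :=
  ![![1, 0, 0], ![0, 1, 0], ![0, 0, 1],
    ![(e 2 - e 0) * (e 0 - e 1), (e 1 - e 2) * (e 0 - e 1), (e 1 - e 2) * (e 2 - e 0)]]

theorem exists_eq_smul_splitBasePoint (he : Injective e) {v : Fin 3 → L}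
    (hU : conicEval (split e).qU v = 0) (hW : conicEval (split e).qW v = 0) :
    ∃ (i : Fin 4) (x : L), v = x • splitBasePoint e i := by
  have h12 : e 1 - e 2 ≠ 0 := sub_ne_zero.2 (he.ne (by decide))
  have h20 : e 2 - e 0 ≠ 0 := sub_ne_zero.2 (he.ne (by decide))
  have h01 : e 0 - e 1 ≠ 0 := sub_ne_zero.2 (he.ne (by decide))
  simp only [conicEval, split, cons_val] at hU hW
  have r0 : v 0 * ((e 2 - e 0) * v 1 - (e 0 - e 1) * v 2) = 0 := by
    linear_combination -hU - e 0 * hW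
  have r1 : v 1 * ((e 1 - e 2) * v 0 - (e 0 - e 1) * v 2) = 0 := by
    linear_combination hU + e 1 * hW
  by_cases h0 : v 0 = 0
  · by_cases h1 : v 1 = 0
    · refine ⟨2, v 2, ?_⟩
      ext i
      fin_cases i <;> simp [splitBasePoint, h0, h1]
    · have h2 : v 2 = 0 := by simpa [h0, h1, h01] using r1
      refine ⟨1, v 1, ?_⟩
      ext i
      fin_cases i <;> simp [splitBasePoint, h0, h2]
  · have s0 := (mul_eq_zero.1 r0).resolve_left h0
    by_cases h1 : v 1 = 0
    · have h2 : v 2 = 0 := by simpa [h1, h01] using s0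
      refine ⟨0, v 0, ?_⟩
      ext i
      fin_cases i <;> simp [splitBasePoint, h1, h2]
    · have s1 := (mul_eq_zero.1 r1).resolve_left h1
      refine ⟨3, v 2 / ((e 1 - e 2) * (e 2 - e 0)), ?_⟩
      ext i
      fin_cases i <;> simp [splitBasePoint] <;> field_simp
      · linear_combination s1
      · linear_combination s0

theorem splitBasePoint_ne_zero (he : Injective e) (i : Fin 4) : splitBasePoint e i ≠ 0 := by
  have h20 : e 2 - e 0 ≠ 0 := sub_ne_zero.2 (he.ne (by decide))
  have h01 : e 0 - e 1 ≠ 0 := sub_ne_zero.2 (he.ne (by decide))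
  fin_cases i <;> simp [splitBasePoint, h20, h01]

theorem finite_baseLocus_split (he : Injective e) : (split e).baseLocus.Finite := by
  refine (Set.finite_range fun i => Projectivization.mk L _ (splitBasePoint_ne_zero he i)).subset ?_
  intro x hx
  obtain ⟨i, a, hi⟩ := exists_eq_smul_splitBasePoint he hx.1 hx.2
  refine ⟨i, ?_⟩
  rw [← x.mk_rep, eq_comm, Projectivization.mk_eq_mk_iff']
  exact ⟨a, hi.symm⟩

theorem single_mem_baseLocus_split (i : Fin 3) :
    Projectivization.mk L (Pi.single i 1) (by simp) ∈ (split e).baseLocus := by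
  rw [mk_mem_baseLocus]
  fin_cases i <;> simp [conicEval, split]

theorem conicPolar_col_of_smul_split_eq {i j : Fin 3} (hij : i < j)
    (h : (op (A, B, t) : (G4 L)ᵐᵒᵖ) • split e = split e) :
    t.val ^ 2 * conicPolar (split e).qW (B.1.col i) (B.1.col j) = 1 := by
  have hW := (isMonic_split e).conicSub_qW_of_smul_eq h
  obtain ⟨rfl, rfl⟩ | ⟨rfl, rfl⟩ | ⟨rfl, rfl⟩ :
      i = 0 ∧ j = 1 ∨ i = 0 ∧ j = 2 ∨ i = 1 ∧ j = 2 := by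
    lia
  exacts [congrFun hW 3, congrFun hW 4, congrFun hW 5]

theorem eq_of_smul_split_eq_of_col_eq_smul {a : Fin 3 → L}
    (h : (op (A, B, t) : (G4 L)ᵐᵒᵖ) • split e = split e)
    (h' : (op (A', B', t) : (G4 L)ᵐᵒᵖ) • split e = split e)
    (ha : ∀ i, B'.1.col i = a i • B.1.col i) : B' = B := by
  have hmul {i j : Fin 3} (hij : i < j) : a i * a j = 1 := by
    have hpolar' := conicPolar_col_of_smul_split_eq hij h'
    rw [ha, ha, conicPolar_smul_smul] at hpolar'
    linear_combination hpolar' - a i * a j * conicPolar_col_of_smul_split_eq hij h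
  have hB' : B'.1 = B.1 * diagonal a := by
    ext i j
    simpa [mul_comm] using congrFun (ha j) i
  have hprod : a 0 * a 1 * a 2 = 1 := by
    simpa [hB', Fin.prod_univ_three] using B'.det_coe
  have h0 : a 0 = 1 := by
    linear_combination hprod - a 0 * hmul (show (1 : Fin 3) < 2 by decide)
  have h1 : a 1 = 1 := by
    simpa [h0] using hmul (show (0 : Fin 3) < 1 by decide)
  have h2 : a 2 = 1 := by
    simpa [h0] using hmul (show (0 : Fin 3) < 2 by decide)
  have ha1 : diagonal a = 1 := diagonal_eq_one.2 <| by
    ext i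
    fin_cases i <;> assumption
  exact Subtype.ext (by rw [hB', ha1, mul_one])

theorem finite_stabilizer_split (he : Injective e) :
    (MulAction.stabilizer (G4 L)ᵐᵒᵖ (split e) : Set (G4 L)ᵐᵒᵖ).Finite := by
  let x (i : Fin 3) : ℙ L (Fin 3 → L) := Projectivization.mk L (Pi.single i 1) (by simp)
  have hunits : {t : Lˣ | t ^ 6 = 1}.Finite := (inferInstance : Finite (rootsOfUnity 6 L))
  have hfinite := hunits.prod (Set.Finite.pi' fun _ : Fin 3 => finite_baseLocus_split he)
  refine Set.Finite.of_injOn (f := fun g => (g.unop.2.2, fun i => g.unop.2.1 • x i))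
    ?_ ?_ hfinite
  · rintro ⟨A, B, t⟩ (h : op (A, B, t) • split e = split e)
    exact ⟨(isMonic_split e).pow_six_eq_one_of_smul_eq h, fun i =>
      (isMonic_split e).smul_mem_baseLocus h (single_mem_baseLocus_split i)⟩
  · rintro ⟨A', B', t⟩ (h' : op (A', B', t) • split e = split e) ⟨A, B, t'⟩
      (h : op (A, B, t') • split e = split e) heq
    obtain ⟨rfl, hx⟩ := Prod.mk.inj heq
    have hcol (i : Fin 3) : ∃ a : L, B'.1.col i = a • B.1.col i := by
      have hi : B' • x i = B • x i := congrFun hx i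
      rw [Projectivization.smul_mk, Projectivization.smul_mk, Projectivization.mk_eq_mk_iff'] at hi
      obtain ⟨a, hi⟩ := hi
      refine ⟨a, ?_⟩
      change a • (B.1 *ᵥ Pi.single i 1) = B'.1 *ᵥ Pi.single i 1 at hi
      rw [← mulVec_single_one, ← mulVec_single_one, hi]
    choose a ha using hcol
    obtain rfl := eq_of_smul_split_eq_of_col_eq_smul h h' ha
    obtain rfl := (isMonic_split e).eq_of_smul_eq h' h
    rfl

end Split

end Stabilizer

section Stability

variable {L : Type*} [Field L] {P Q : PointedPencil L}

theorem IsMonic.isMonicWithRoots (h : P.IsMonic) {e : Fin 3 → L}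
    (he : ∀ i, cubicEval P.discCubic 1 (e i) = 0) : P.IsMonicWithRoots e where
  toIsMonic := h
  conicDisc_eq_zero i := by
    rw [← he i, cubicEval_discCubic, one_smul]

variable [IsAlgClosed L]

theorem IsMonic.exists_roots (hP : P.IsMonic) (h : P.disc ≠ 0) :
    ∃ e : Fin 3 → L, Injective e ∧ ∀ i, cubicEval P.discCubic 1 (e i) = 0 :=
  exists_injective_cubicEval_eq_zero (hP.discCubic_a ▸ one_ne_zero) (hP.disc_eq_discr ▸ h)

theorem equiv_of_invariants_eq (hP : P.disc ≠ 0) (h : P.invariants = Q.invariants) : P ≈ Q := by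
  have hQ : Q.disc ≠ 0 := ne_of_eq_of_ne (congrFun h 2).symm hP
  obtain ⟨P₁, hPP₁, hP₁⟩ := exists_isMonic_equiv hP
  obtain ⟨Q₁, hQQ₁, hQ₁⟩ := exists_isMonic_equiv hQ
  have h₁ : P₁.invariants = Q₁.invariants :=
    (invariants_eq_of_equiv hPP₁).trans (h.trans (invariants_eq_of_equiv hQQ₁).symm)
  obtain ⟨P₂, hPP₂, hP₂, hcubic⟩ := hP₁.exists_equiv_discCubic_eq hQ₁ h₁
  obtain ⟨e, he, hroots⟩ := hQ₁.exists_roots (disc_eq_of_equiv hQQ₁ ▸ hQ)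
  have hP₂e : P₂ ≈ split e := (hP₂.isMonicWithRoots (hcubic ▸ hroots)).equiv_split he
  have hQ₁e : Q₁ ≈ split e := (hQ₁.isMonicWithRoots hroots).equiv_split he
  calc P ≈ P₁ := Setoid.symm hPP₁
    _ ≈ P₂ := Setoid.symm hPP₂
    _ ≈ split e := hP₂e
    _ ≈ Q₁ := Setoid.symm hQ₁e
    _ ≈ Q := hQQ₁

theorem finite_stabilizer_of_disc_ne_zero (h : P.disc ≠ 0) :
    (MulAction.stabilizer (G4 L)ᵐᵒᵖ P : Set (G4 L)ᵐᵒᵖ).Finite := by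
  obtain ⟨Q, hQP, hQ⟩ := exists_isMonic_equiv h
  obtain ⟨e, he, hroots⟩ := hQ.exists_roots (disc_eq_of_equiv hQP ▸ h)
  have hQe : Q ≈ split e := (hQ.isMonicWithRoots hroots).equiv_split he
  exact finite_stabilizer_of_orbitRel (Setoid.trans (Setoid.symm hQe) hQP)
    (finite_stabilizer_split he)

theorem stable4_coords_of_disc_ne_zero (h : P.disc ≠ 0) : Stable4 P.coords := by
  have horbit (Q : PointedPencil L) : Q ≈ P ↔ Q.invariants = P.invariants :=
    ⟨invariants_eq_of_equiv, fun hQ => Setoid.symm (equiv_of_invariants_eq h hQ.symm)⟩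
  refine stable4_coords_iff.2 ⟨?_, finite_stabilizer_of_disc_ne_zero h⟩
  simpa only [horbit] using isZariskiClosed_setOf_invariants_eq P.invariants

theorem stable4_intCast_coords {P : PointedPencil ℤ} (h : (P.disc : L) ≠ 0) :
    Stable4 (Int.castRingHom L ∘ P.coords) := by
  have hdisc : (P.map (Int.castRingHom L)).disc = P.disc :=
    invariants_map (Int.castRingHom L) P 2
  rw [← coords_map]
  exact stable4_coords_of_disc_ne_zero (hdisc ▸ h)

end Stability

theorem exists_intCast_disc_ne_zero (K : Type*) [Field K] :
    ∃ P : PointedPencil ℤ, (P.disc : K) ≠ 0 := by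
  let P : PointedPencil ℤ := ⟨![1, 0, 1, 0, 0, 1], ![0, 1, 1, 1, 0, 1], 1, 0⟩
  let Q : PointedPencil ℤ := split ![-1, 1, 0]
  have hP : P.disc = 125 := by decide
  have hQ : Q.disc = 4 := by decide
  have hcoprime : IsCoprime P.disc Q.disc := by
    rw [hP, hQ]
    norm_num
  by_contra! h
  have := hcoprime.intCast (R := K)
  rw [h P, h Q, isCoprime_zero_left] at this
  exact not_isUnit_zero this

end PointedPencil

open PointedPencil in
theorem exists_stable4_over_prime_field_general {L : Type*} [Field L] [IsAlgClosed L] :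
    ∃ c : Fin 14 → L, (∀ i, ∃ z : ℤ, c i = (z : L)) ∧ Stable4 c := by
  obtain ⟨P, hP⟩ := exists_intCast_disc_ne_zero L
  exact ⟨Int.castRingHom L ∘ P.coords, fun i => ⟨P.coords i, rfl⟩, stable4_intCast_coords hP⟩

/-
STATEMENT 8 (Corollary 4.3(1)): for every prime p and L an algebraic closure of 𝔽_p,
there is a stable vector in V₄ all of whose 14 coordinates lie in the prime subfield
𝔽_p (i.e. are images of integers).
-/
theorem exists_stable4_over_prime_field
    (p : ℕ) (hp : p.Prime)
    {L : Type*} [Field L] [IsAlgClosed L] [CharP L p] :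
    ∃ c : Fin 14 → L, (∀ i, ∃ z : ℤ, c i = (z : L)) ∧ Stable4 c :=
  exists_stable4_over_prime_field_general
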